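/- In H_{k⁺ⁱ}, for every α ≥ 0 the dual generators of H_k slide across the inclusion as follows: (a) φ(x̄(k)_{j,α}) = ψ(x̄(₊ᵢk)_{j,α}) for every j ≠ i, i+1; (b) φ(x̄(k)_{i,α}) = ξ·ψ(x̄(₊ᵢk)_{i,α−1}) + ψ(x̄(₊ᵢk)_{i,α}); (c) φ(x̄(k)_{i+1,α}) = Σ_{f=0}^{α} (−1)^f ξ^f · ψ(x̄(₊ᵢk)_{i+1,α−f}). -/

import Mathlib

/-!
Cohomology rings of `n`-step partial flag varieties, following
Khovanov–Lauda, "A diagrammatic approach to categorification of quantum groups III",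
Section 5 (Iterated flag varieties).
-/

open MvPolynomial Finset TensorProduct

noncomputable section

variable (𝕜 : Type) [Field 𝕜]

/-- The generator `x(k)_{j,α}` of `H_k` (with the conventions `x(k)_{j,0} = 1` and
`x(k)_{j,α} = 0` for `j` or `α` out of range), at the level of the ambient polynomial ring. -/
def xp (n : ℕ) (k : ℕ → ℕ) (j α : ℕ) : MvPolynomial (ℕ × ℕ) 𝕜 :=
  if α = 0 then 1 else if 1 ≤ j ∧ j ≤ n ∧ α ≤ k j - k (j - 1) then X (j, α) else 0

/-- The degree `2d` part of the defining relation of `H_k`: the sum over all tuples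
`(α_1, …, α_n)` with `α_1 + ⋯ + α_n = d` of the products `x(k)_{1,α_1} ⋯ x(k)_{n,α_n}`
(out-of-range tuples contribute `0`). -/
def relPoly (n : ℕ) (k : ℕ → ℕ) (d : ℕ) : MvPolynomial (ℕ × ℕ) 𝕜 :=
  ∑ t ∈ Finset.Nat.antidiagonalTuple n d, ∏ j : Fin n, xp 𝕜 n k ((j : ℕ) + 1) (t j)

/-- The pairs `(j, α)` indexing the actual generators of `H_k`. -/
def InRangeK (n : ℕ) (k : ℕ → ℕ) (j α : ℕ) : Prop :=
  1 ≤ j ∧ j ≤ n ∧ 1 ≤ α ∧ α ≤ k j - k (j - 1)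

/-- The defining ideal of `H_k`: the relations `relPoly` for every `d ≥ 1`, together with
all the irrelevant variables of the ambient polynomial ring. -/
def relIdealK (n : ℕ) (k : ℕ → ℕ) : Ideal (MvPolynomial (ℕ × ℕ) 𝕜) :=
  Ideal.span ({p | ∃ d, 1 ≤ d ∧ p = relPoly 𝕜 n k d} ∪
    {p | ∃ j α : ℕ, ¬ InRangeK n k j α ∧ p = X (j, α)})

/-- The cohomology ring `H_k` of the `n`-step flag variety `Fl(k)`. -/
abbrev HK (n : ℕ) (k : ℕ → ℕ) : Type := MvPolynomial (ℕ × ℕ) 𝕜 ⧸ relIdealK 𝕜 n k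

/-- The generator `x(k)_{j,α} ∈ H_k` (with conventions). -/
def xK (n : ℕ) (k : ℕ → ℕ) (j α : ℕ) : HK 𝕜 n k :=
  Ideal.Quotient.mk (relIdealK 𝕜 n k) (xp 𝕜 n k j α)

open Classical in
/-- The dual generator `x̄(k)_{j,α}`: the sum over all tuples `(α_ℓ)_{ℓ ≠ j}` with
`∑_{ℓ ≠ j} α_ℓ = α` of the products `∏_{ℓ ≠ j} x(k)_{ℓ,α_ℓ}`, at the polynomial level. -/
def xbarp (n : ℕ) (k : ℕ → ℕ) (j α : ℕ) : MvPolynomial (ℕ × ℕ) 𝕜 :=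
  ∑ t ∈ Finset.Nat.antidiagonalTuple n α,
    if ∀ ℓ : Fin n, (ℓ : ℕ) + 1 = j → t ℓ = 0 then
      ∏ ℓ : Fin n, xp 𝕜 n k ((ℓ : ℕ) + 1) (t ℓ)
    else 0

/-- The dual generator `x̄(k)_{j,α} ∈ H_k`. -/
def xbarK (n : ℕ) (k : ℕ → ℕ) (j α : ℕ) : HK 𝕜 n k :=
  Ideal.Quotient.mk (relIdealK 𝕜 n k) (xbarp 𝕜 n k j α)

/-- The dual generator with an integer index, with `x̄(k)_{j,α} = 0` for `α < 0`. -/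
def xbarKZ (n : ℕ) (k : ℕ → ℕ) (j : ℕ) (α : ℤ) : HK 𝕜 n k :=
  if 0 ≤ α then xbarK 𝕜 n k j α.toNat else 0

/-- The sequence `₊ᵢk`, obtained from `k` by replacing `k i` with `k i + 1`. -/
def kup (k : ℕ → ℕ) (i : ℕ) : ℕ → ℕ := fun j => if j = i then k i + 1 else k j

/-- The pairs `(j, α)` indexing the actual generators of `H_{k⁺ⁱ}`:
`ξ` is the variable `(0, 1)`, the `x_{j,α}` (`j ≠ i+1`) are the variables `(j, α)`, and
the `x'_{i+1,α}` are the variables `(i+1, α)`. -/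
def InRangeKi (n : ℕ) (k : ℕ → ℕ) (i j α : ℕ) : Prop :=
  (j = 0 ∧ α = 1) ∨
  (1 ≤ j ∧ j ≤ n ∧ j ≠ i + 1 ∧ 1 ≤ α ∧ α ≤ k j - k (j - 1)) ∨
  (j = i + 1 ∧ 1 ≤ α ∧ α ≤ k (i + 1) - k i - 1)

/-- The generator `x_{j,α}` (for `j ≠ i + 1`) of `H_{k⁺ⁱ}`, with conventions,
at the polynomial level. -/
def yp (n : ℕ) (k : ℕ → ℕ) (i j α : ℕ) : MvPolynomial (ℕ × ℕ) 𝕜 :=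
  if α = 0 then 1
  else if 1 ≤ j ∧ j ≤ n ∧ j ≠ i + 1 ∧ α ≤ k j - k (j - 1) then X (j, α) else 0

/-- The generator `x'_{i+1,α}` of `H_{k⁺ⁱ}`, with conventions, at the polynomial level. -/
def y'p (n : ℕ) (k : ℕ → ℕ) (i α : ℕ) : MvPolynomial (ℕ × ℕ) 𝕜 :=
  if α = 0 then 1 else if α ≤ k (i + 1) - k i - 1 then X (i + 1, α) else 0

/-- The coefficient of `t^α` in the `j`-th factor of the generating series
`(1 + ξt) ⬝ (∑_α x'_{i+1,α} t^α) ⬝ ∏_{j ≠ i+1} (∑_α x_{j,α} t^α)` defining `H_{k⁺ⁱ}`;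
the factor `j = 0` is `1 + ξ t`. -/
def fp (n : ℕ) (k : ℕ → ℕ) (i j α : ℕ) : MvPolynomial (ℕ × ℕ) 𝕜 :=
  if j = 0 then (if α = 0 then 1 else if α = 1 then X (0, 1) else 0)
  else if j = i + 1 then y'p 𝕜 n k i α
  else yp 𝕜 n k i j α

/-- The coefficient of `t^d` in
`(1 + ξt) ⬝ (∑_α x'_{i+1,α} t^α) ⬝ ∏_{j ≠ i+1} (∑_α x_{j,α} t^α)`. -/
def relPolyKi (n : ℕ) (k : ℕ → ℕ) (i d : ℕ) : MvPolynomial (ℕ × ℕ) 𝕜 :=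
  ∑ t ∈ Finset.Nat.antidiagonalTuple (n + 1) d, ∏ j : Fin (n + 1), fp 𝕜 n k i (j : ℕ) (t j)

/-- The defining ideal of `H_{k⁺ⁱ}`. -/
def relIdealKi (n : ℕ) (k : ℕ → ℕ) (i : ℕ) : Ideal (MvPolynomial (ℕ × ℕ) 𝕜) :=
  Ideal.span ({p | ∃ d, 1 ≤ d ∧ p = relPolyKi 𝕜 n k i d} ∪
    {p | ∃ j α : ℕ, ¬ InRangeKi n k i j α ∧ p = X (j, α)})

/-- The cohomology ring `H_{k⁺ⁱ}` of the `(n+1)`-step flag variety `Fl(k⁺ⁱ)`. -/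
abbrev HKi (n : ℕ) (k : ℕ → ℕ) (i : ℕ) : Type := MvPolynomial (ℕ × ℕ) 𝕜 ⧸ relIdealKi 𝕜 n k i

/-- The degree `2` generator `ξ ∈ H_{k⁺ⁱ}`. -/
def xiK (n : ℕ) (k : ℕ → ℕ) (i : ℕ) : HKi 𝕜 n k i :=
  Ideal.Quotient.mk (relIdealKi 𝕜 n k i) (X (0, 1))

/-- The generator `x_{j,α} ∈ H_{k⁺ⁱ}` (for `j ≠ i + 1`), with conventions. -/
def yK (n : ℕ) (k : ℕ → ℕ) (i j α : ℕ) : HKi 𝕜 n k i :=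
  Ideal.Quotient.mk (relIdealKi 𝕜 n k i) (yp 𝕜 n k i j α)

/-- The generator `x'_{i+1,α} ∈ H_{k⁺ⁱ}`, with conventions. -/
def y'K (n : ℕ) (k : ℕ → ℕ) (i α : ℕ) : HKi 𝕜 n k i :=
  Ideal.Quotient.mk (relIdealKi 𝕜 n k i) (y'p 𝕜 n k i α)

/-- `φ : H_k → H_{k⁺ⁱ}` is the algebra homomorphism determined by
`φ(x(k)_{j,α}) = x_{j,α}` for `j ≠ i+1` and
`φ(x(k)_{i+1,α}) = ξ·x'_{i+1,α-1} + x'_{i+1,α}`. -/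
def IsPhi (n : ℕ) (k : ℕ → ℕ) (i : ℕ) (φ : HK 𝕜 n k →ₐ[𝕜] HKi 𝕜 n k i) : Prop :=
  (∀ j α : ℕ, j ≠ i + 1 → φ (xK 𝕜 n k j α) = yK 𝕜 n k i j α) ∧
  (∀ α : ℕ, 1 ≤ α → φ (xK 𝕜 n k (i + 1) α) =
    xiK 𝕜 n k i * y'K 𝕜 n k i (α - 1) + y'K 𝕜 n k i α)

/-- `ψ : H_{₊ᵢk} → H_{k⁺ⁱ}` is the algebra homomorphism determined by
`ψ(x(₊ᵢk)_{j,α}) = x_{j,α}` for `j ≠ i, i+1`, `ψ(x(₊ᵢk)_{i+1,α}) = x'_{i+1,α}`, and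
`ψ(x(₊ᵢk)_{i,α}) = ξ·x_{i,α-1} + x_{i,α}`. -/
def IsPsi (n : ℕ) (k : ℕ → ℕ) (i : ℕ) (ψ : HK 𝕜 n (kup k i) →ₐ[𝕜] HKi 𝕜 n k i) : Prop :=
  (∀ j α : ℕ, j ≠ i → j ≠ i + 1 → ψ (xK 𝕜 n (kup k i) j α) = yK 𝕜 n k i j α) ∧
  (∀ α : ℕ, ψ (xK 𝕜 n (kup k i) (i + 1) α) = y'K 𝕜 n k i α) ∧
  (∀ α : ℕ, 1 ≤ α → ψ (xK 𝕜 n (kup k i) i α) =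
    xiK 𝕜 n k i * yK 𝕜 n k i i (α - 1) + yK 𝕜 n k i i α)

/-- The degree `2d` homogeneous component of a quotient of the polynomial ring, where the
variable `(j, α)` has degree `2α`. -/
def qgrade (I : Ideal (MvPolynomial (ℕ × ℕ) 𝕜)) (d : ℕ) :
    Submodule 𝕜 (MvPolynomial (ℕ × ℕ) 𝕜 ⧸ I) :=
  Submodule.map (Ideal.Quotient.mkₐ 𝕜 I).toLinearMap
    (weightedHomogeneousSubmodule 𝕜 (fun v : ℕ × ℕ => 2 * v.2) d)

end

section Statements

variable (𝕜 : Type) [Field 𝕜]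

/-!
Put the generators and dual generators into generating series `x_j(t) = ∑ x_{j,α} t^α` and
`x̄_j(t) = ∑ x̄_{j,α} t^α`, so that `x̄_j(t) = ∏_{ℓ ≠ j} x_ℓ(t)`. The maps `φ` and `ψ` agree on
`x_j(t)` for `j ≠ i, i+1`, while `ψ(x_i(t)) = (1 + ξt) φ(x_i(t))` and
`φ(x_{i+1}(t)) = (1 + ξt) ψ(x_{i+1}(t))`. Hence `φ(x̄_j(t))` and `ψ(x̄_j(t))` are equal when both
of the factors `i` and `i+1` occur in the product, because the two factors `1 + ξt` cancel;
omitting `i` or `i+1` leaves one factor `1 + ξt`, whose inverse is the geometric series in `-ξt`.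
-/

section Products

variable {ι M : Type*} [CommMonoid M] {s : Finset ι} {f g : ι → M} {a b : ι} {c : M}

theorem prod_eq_mul_prod_of_eq_mul (ha : a ∈ s) (hfg : ∀ m ∈ s, m ≠ a → f m = g m)
    (hfa : f a = c * g a) : ∏ m ∈ s, f m = c * ∏ m ∈ s, g m := by
  classical
  have herase : ∏ m ∈ s.erase a, f m = ∏ m ∈ s.erase a, g m :=
    prod_congr rfl fun m hm => hfg m (mem_of_mem_erase hm) (ne_of_mem_erase hm)
  rw [← mul_prod_erase s f ha, ← mul_prod_erase s g ha, hfa, herase, mul_assoc]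

theorem prod_eq_prod_of_eq_mul_of_eq_mul (ha : a ∈ s) (hb : b ∈ s) (hab : a ≠ b)
    (hfg : ∀ m ∈ s, m ≠ a → m ≠ b → f m = g m) (hga : g a = c * f a) (hfb : f b = c * g b) :
    ∏ m ∈ s, f m = ∏ m ∈ s, g m := by
  classical
  have herase : ∏ m ∈ s.erase a, f m = c * ∏ m ∈ s.erase a, g m :=
    prod_eq_mul_prod_of_eq_mul (mem_erase.2 ⟨hab.symm, hb⟩)
      (fun m hm => hfg m (mem_of_mem_erase hm) (ne_of_mem_erase hm)) hfb
  rw [← mul_prod_erase s f ha, ← mul_prod_erase s g ha, herase, hga, mul_left_comm, mul_assoc]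

theorem prod_fin_filter_succ_ne_eq_prod_Icc_erase (f : ℕ → M) (n j : ℕ) :
    ∏ ℓ ∈ {ℓ : Fin n | ¬ (ℓ : ℕ) + 1 = j}, f (ℓ + 1) = ∏ m ∈ (Icc 1 n).erase j, f m := by
  rw [prod_filter, Fin.prod_univ_eq_prod_range (fun ℓ => if ¬ ℓ + 1 = j then f (ℓ + 1) else 1) n,
    range_eq_Ico, prod_Ico_add' (fun m => if ¬ m = j then f m else 1), ← prod_filter,
    filter_ne', zero_add, Ico_add_one_right_eq_Icc]

end Products

section PowerSeriesCoefficients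

variable {R : Type*} [CommSemiring R]

theorem coeff_prod_fin_eq_sum_antidiagonalTuple {n : ℕ} (f : Fin n → PowerSeries R) (d : ℕ) :
    PowerSeries.coeff d (∏ ℓ, f ℓ) =
      ∑ t ∈ Nat.antidiagonalTuple n d, ∏ ℓ, PowerSeries.coeff (t ℓ) (f ℓ) := by
  rw [PowerSeries.coeff_prod]
  exact sum_equiv Finsupp.equivFunOnFinite (by simp [Nat.mem_antidiagonalTuple]) fun _ _ => rfl

theorem sum_antidiagonalTuple_prod_of_vanishing {n : ℕ} (p : Fin n → Prop) [DecidablePred p]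
    [DecidablePred fun t : Fin n → ℕ => ∀ ℓ, p ℓ → t ℓ = 0]
    (g : Fin n → ℕ → R) (hg : ∀ ℓ, p ℓ → g ℓ 0 = 1) (d : ℕ) :
    (∑ t ∈ Nat.antidiagonalTuple n d, if ∀ ℓ, p ℓ → t ℓ = 0 then ∏ ℓ, g ℓ (t ℓ) else 0) =
      PowerSeries.coeff d (∏ ℓ with ¬ p ℓ, PowerSeries.mk (g ℓ)) := by
  rw [prod_filter, coeff_prod_fin_eq_sum_antidiagonalTuple]
  refine sum_congr rfl fun t _ => ?_
  split_ifs with ht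
  · refine prod_congr rfl fun ℓ _ => ?_
    by_cases hℓ : p ℓ
    · simp [hℓ, ht ℓ hℓ, hg ℓ hℓ]
    · simp [hℓ]
  · push Not at ht
    obtain ⟨ℓ, hℓ, htℓ⟩ := ht
    exact (prod_eq_zero (mem_univ ℓ) (by simp [hℓ, PowerSeries.coeff_one, htℓ])).symm

end PowerSeriesCoefficients

section LinearSeries

variable {R S : Type*} [CommSemiring R] [CommRing S]

/-- The power series `1 + a t`. For `a = ξ` it is the factor by which the generating series of
the generators of `H_k` and of `H_{₊ᵢk}` differ in `H_{k⁺ⁱ}`. -/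
noncomputable def linearSeries (a : R) : PowerSeries R :=
  1 + PowerSeries.C a * PowerSeries.X

theorem coeff_zero_linearSeries_mul (a : R) (f : PowerSeries R) :
    PowerSeries.coeff 0 (linearSeries a * f) = PowerSeries.coeff 0 f := by
  simp [linearSeries]

theorem coeff_succ_linearSeries_mul (a : R) (f : PowerSeries R) (d : ℕ) :
    PowerSeries.coeff (d + 1) (linearSeries a * f) =
      a * PowerSeries.coeff d f + PowerSeries.coeff (d + 1) f := by
  rw [linearSeries, add_mul, one_mul, mul_assoc, map_add, PowerSeries.coeff_C_mul,
    PowerSeries.coeff_succ_X_mul, add_comm]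

theorem eq_linearSeries_mul {a : R} {f g : PowerSeries R}
    (hzero : PowerSeries.coeff 0 f = PowerSeries.coeff 0 g)
    (hsucc : ∀ d, PowerSeries.coeff (d + 1) f =
      a * PowerSeries.coeff d g + PowerSeries.coeff (d + 1) g) :
    f = linearSeries a * g := by
  ext d
  cases d with
  | zero => rw [hzero, coeff_zero_linearSeries_mul]
  | succ d => rw [hsucc, coeff_succ_linearSeries_mul]

theorem mk_neg_pow_mul_linearSeries (a : S) :
    PowerSeries.mk (fun d => (-a) ^ d) * linearSeries a = 1 := by
  simpa [PowerSeries.rescale_mk, PowerSeries.rescale_X, linearSeries] using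
    congrArg (PowerSeries.rescale (-a)) (PowerSeries.mk_one_mul_one_sub_eq_one S)

theorem coeff_eq_sum_of_eq_linearSeries_mul {a : S} {f g : PowerSeries S}
    (h : g = linearSeries a * f) (d : ℕ) :
    PowerSeries.coeff d f =
      ∑ e ∈ range (d + 1), (-1) ^ e * a ^ e * PowerSeries.coeff (d - e) g := by
  have hf : f = PowerSeries.mk (fun e => (-a) ^ e) * g := by
    rw [h, ← mul_assoc, mk_neg_pow_mul_linearSeries, one_mul]
  rw [hf, PowerSeries.coeff_mul, Nat.sum_antidiagonal_eq_sum_range_succ_mk]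
  simp only [PowerSeries.coeff_mk, ← mul_pow, neg_one_mul]

end LinearSeries

section GeneratingSeries

/-- The generating series `∑_α x(k)_{j,α} t^α` of the `j`-th block of generators of `H_k`. -/
noncomputable def xSeries (n : ℕ) (k : ℕ → ℕ) (j : ℕ) : PowerSeries (HK 𝕜 n k) :=
  PowerSeries.mk (xK 𝕜 n k j)

/-- The generating series `∑_α x̄(k)_{j,α} t^α` of the `j`-th block of dual generators of `H_k`. -/
noncomputable def xbarSeries (n : ℕ) (k : ℕ → ℕ) (j : ℕ) : PowerSeries (HK 𝕜 n k) :=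
  PowerSeries.mk (xbarK 𝕜 n k j)

theorem xK_zero (n : ℕ) (k : ℕ → ℕ) (j : ℕ) : xK 𝕜 n k j 0 = 1 := by
  simp [xK, xp]

theorem xbarSeries_eq_prod (n : ℕ) (k : ℕ → ℕ) (j : ℕ) :
    xbarSeries 𝕜 n k j = ∏ m ∈ (Icc 1 n).erase j, xSeries 𝕜 n k m := by
  classical
  ext α
  simp only [xbarSeries, PowerSeries.coeff_mk, xbarK, xbarp, map_sum, apply_ite, map_prod,
    map_zero]
  rw [← prod_fin_filter_succ_ne_eq_prod_Icc_erase]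
  exact sum_antidiagonalTuple_prod_of_vanishing (fun ℓ : Fin n => (ℓ : ℕ) + 1 = j)
    (fun ℓ => xK 𝕜 n k (ℓ + 1)) (fun ℓ _ => xK_zero 𝕜 n k (ℓ + 1)) α

theorem xbarKZ_natCast (n : ℕ) (k : ℕ → ℕ) (j α : ℕ) :
    xbarKZ 𝕜 n k j (α : ℤ) = xbarK 𝕜 n k j α := by
  simp [xbarKZ]

theorem xbarKZ_of_neg (n : ℕ) (k : ℕ → ℕ) (j : ℕ) {α : ℤ} (hα : α < 0) :
    xbarKZ 𝕜 n k j α = 0 :=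
  if_neg hα.not_ge

variable {𝕜} {n : ℕ} {k : ℕ → ℕ} {A : Type*} [CommSemiring A] [Algebra 𝕜 A]

theorem coeff_mapAlgHom_xSeries (χ : HK 𝕜 n k →ₐ[𝕜] A) (j α : ℕ) :
    PowerSeries.coeff α (PowerSeries.mapAlgHom χ (xSeries 𝕜 n k j)) = χ (xK 𝕜 n k j α) := by
  simp [PowerSeries.mapAlgHom_apply, xSeries]

theorem coeff_mapAlgHom_xbarSeries (χ : HK 𝕜 n k →ₐ[𝕜] A) (j α : ℕ) :
    PowerSeries.coeff α (PowerSeries.mapAlgHom χ (xbarSeries 𝕜 n k j)) =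
      χ (xbarK 𝕜 n k j α) := by
  simp [PowerSeries.mapAlgHom_apply, xbarSeries]

theorem mapAlgHom_xbarSeries (χ : HK 𝕜 n k →ₐ[𝕜] A) (j : ℕ) :
    PowerSeries.mapAlgHom χ (xbarSeries 𝕜 n k j) =
      ∏ m ∈ (Icc 1 n).erase j, PowerSeries.mapAlgHom χ (xSeries 𝕜 n k m) := by
  rw [xbarSeries_eq_prod, map_prod]

end GeneratingSeries

section Sliding

variable {𝕜} {n i : ℕ} {k : ℕ → ℕ}
  {φ : HK 𝕜 n k →ₐ[𝕜] HKi 𝕜 n k i} {ψ : HK 𝕜 n (kup k i) →ₐ[𝕜] HKi 𝕜 n k i}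

theorem mapAlgHom_xSeries_eq_of_ne (hφ : IsPhi 𝕜 n k i φ) (hψ : IsPsi 𝕜 n k i ψ) {j : ℕ}
    (hji : j ≠ i) (hji' : j ≠ i + 1) :
    PowerSeries.mapAlgHom φ (xSeries 𝕜 n k j) =
      PowerSeries.mapAlgHom ψ (xSeries 𝕜 n (kup k i) j) := by
  ext α
  rw [coeff_mapAlgHom_xSeries, coeff_mapAlgHom_xSeries, hφ.1 j α hji', hψ.1 j α hji hji']

theorem mapAlgHom_xSeries_self (hφ : IsPhi 𝕜 n k i φ) (hψ : IsPsi 𝕜 n k i ψ) :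
    PowerSeries.mapAlgHom ψ (xSeries 𝕜 n (kup k i) i) =
      linearSeries (xiK 𝕜 n k i) * PowerSeries.mapAlgHom φ (xSeries 𝕜 n k i) := by
  refine eq_linearSeries_mul ?_ fun α => ?_ <;> simp only [coeff_mapAlgHom_xSeries]
  · simp only [xK_zero, map_one]
  · have hi : i ≠ i + 1 := i.lt_succ_self.ne
    rw [hψ.2.2 (α + 1) α.succ_pos, hφ.1 i _ hi, hφ.1 i _ hi, Nat.add_sub_cancel]

theorem mapAlgHom_xSeries_succ (hφ : IsPhi 𝕜 n k i φ) (hψ : IsPsi 𝕜 n k i ψ) :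
    PowerSeries.mapAlgHom φ (xSeries 𝕜 n k (i + 1)) =
      linearSeries (xiK 𝕜 n k i) *
        PowerSeries.mapAlgHom ψ (xSeries 𝕜 n (kup k i) (i + 1)) := by
  refine eq_linearSeries_mul ?_ fun α => ?_ <;> simp only [coeff_mapAlgHom_xSeries]
  · simp only [xK_zero, map_one]
  · rw [hφ.2 (α + 1) α.succ_pos, hψ.2.1, hψ.2.1, Nat.add_sub_cancel]

theorem mapAlgHom_xbarSeries_eq_of_ne (hφ : IsPhi 𝕜 n k i φ) (hψ : IsPsi 𝕜 n k i ψ)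
    (hi : 1 ≤ i) (hin : i + 1 ≤ n) {j : ℕ} (hji : j ≠ i) (hji' : j ≠ i + 1) :
    PowerSeries.mapAlgHom φ (xbarSeries 𝕜 n k j) =
      PowerSeries.mapAlgHom ψ (xbarSeries 𝕜 n (kup k i) j) := by
  rw [mapAlgHom_xbarSeries, mapAlgHom_xbarSeries]
  exact prod_eq_prod_of_eq_mul_of_eq_mul (a := i) (b := i + 1)
    (by simp only [mem_erase, mem_Icc]; omega) (by simp only [mem_erase, mem_Icc]; omega)
    (by omega) (fun m _ => mapAlgHom_xSeries_eq_of_ne hφ hψ)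
    (mapAlgHom_xSeries_self hφ hψ) (mapAlgHom_xSeries_succ hφ hψ)

theorem mapAlgHom_xbarSeries_self (hφ : IsPhi 𝕜 n k i φ) (hψ : IsPsi 𝕜 n k i ψ)
    (hin : i + 1 ≤ n) :
    PowerSeries.mapAlgHom φ (xbarSeries 𝕜 n k i) =
      linearSeries (xiK 𝕜 n k i) *
        PowerSeries.mapAlgHom ψ (xbarSeries 𝕜 n (kup k i) i) := by
  rw [mapAlgHom_xbarSeries, mapAlgHom_xbarSeries]
  exact prod_eq_mul_prod_of_eq_mul (a := i + 1) (by simp only [mem_erase, mem_Icc]; omega)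
    (fun m hm => mapAlgHom_xSeries_eq_of_ne hφ hψ (ne_of_mem_erase hm))
    (mapAlgHom_xSeries_succ hφ hψ)

theorem mapAlgHom_xbarSeries_succ (hφ : IsPhi 𝕜 n k i φ) (hψ : IsPsi 𝕜 n k i ψ)
    (hi : 1 ≤ i) (hin : i ≤ n) :
    PowerSeries.mapAlgHom ψ (xbarSeries 𝕜 n (kup k i) (i + 1)) =
      linearSeries (xiK 𝕜 n k i) *
        PowerSeries.mapAlgHom φ (xbarSeries 𝕜 n k (i + 1)) := by
  rw [mapAlgHom_xbarSeries, mapAlgHom_xbarSeries]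
  exact prod_eq_mul_prod_of_eq_mul (a := i) (by simp only [mem_erase, mem_Icc]; omega)
    (fun m hm hmi => (mapAlgHom_xSeries_eq_of_ne hφ hψ hmi (ne_of_mem_erase hm)).symm)
    (mapAlgHom_xSeries_self hφ hψ)

end Sliding

theorem stmt5 (n N i : ℕ) (k : ℕ → ℕ)
    (hn : 1 ≤ n) (hk0 : k 0 = 0) (hkN : k n = N) (hmono : ∀ j, j < n → k j ≤ k (j + 1))
    (hi1 : 1 ≤ i) (hin : i + 1 ≤ n) (hik : k i < k (i + 1))
    (φ : HK 𝕜 n k →ₐ[𝕜] HKi 𝕜 n k i) (hφ : IsPhi 𝕜 n k i φ)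
    (ψ : HK 𝕜 n (kup k i) →ₐ[𝕜] HKi 𝕜 n k i) (hψ : IsPsi 𝕜 n k i ψ) :
    (∀ j α : ℕ, 1 ≤ j → j ≤ n → j ≠ i → j ≠ i + 1 →
      φ (xbarK 𝕜 n k j α) = ψ (xbarK 𝕜 n (kup k i) j α)) ∧
    (∀ α : ℕ, φ (xbarK 𝕜 n k i α) =
      xiK 𝕜 n k i * ψ (xbarKZ 𝕜 n (kup k i) i ((α : ℤ) - 1)) +
        ψ (xbarK 𝕜 n (kup k i) i α)) ∧
    (∀ α : ℕ, φ (xbarK 𝕜 n k (i + 1) α) =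
      ∑ f ∈ Finset.range (α + 1),
        (-1 : HKi 𝕜 n k i) ^ f * xiK 𝕜 n k i ^ f *
          ψ (xbarK 𝕜 n (kup k i) (i + 1) (α - f))) := by
  refine ⟨fun j α _ _ hji hji' => ?_, fun α => ?_, fun α => ?_⟩
  · rw [← coeff_mapAlgHom_xbarSeries, ← coeff_mapAlgHom_xbarSeries,
      mapAlgHom_xbarSeries_eq_of_ne hφ hψ hi1 hin hji hji']
  · rw [← coeff_mapAlgHom_xbarSeries, mapAlgHom_xbarSeries_self hφ hψ hin]
    cases α with
    | zero =>
      rw [coeff_zero_linearSeries_mul, coeff_mapAlgHom_xbarSeries, xbarKZ_of_neg _ _ _ _ (by simp),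
        map_zero, mul_zero, zero_add]
    | succ α =>
      rw [coeff_succ_linearSeries_mul, coeff_mapAlgHom_xbarSeries, coeff_mapAlgHom_xbarSeries,
        Nat.cast_succ, add_sub_cancel_right, xbarKZ_natCast]
  · have hcoeff := coeff_eq_sum_of_eq_linearSeries_mul
      (mapAlgHom_xbarSeries_succ hφ hψ hi1 (Nat.le_of_succ_le hin)) α
    simpa only [coeff_mapAlgHom_xbarSeries] using hcoeff

end Statements
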